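/- Let r ≥ 1 and let Δ₁, …, Δ_r be positive real numbers such that the reciprocals 1/Δ₁, …, 1/Δ_r are linearly independent over ℚ (as elements of ℝ regarded as a ℚ-vector space). Then for every ε > 0 there exist odd positive integers k₁, …, k_r such that |Δ_i k_i − Δ_j k_j| < ε for all i, j ∈ {1, …, r}. -/

import Mathlib

/-!
The distance to a subgroup `H` of a torus is `H`-invariant, so its Fourier coefficient at a
character nontrivial on `H` vanishes. If every nontrivial character is nontrivial on `H`, the
distance is therefore constant, hence zero, and `H` is dense. Applied to the line
`t ↦ (t / Δ₁, …, t / Δ_r) mod 1` this is Kronecker's theorem: some `t / Δ_i` are simultaneously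
close to half-integers, so the `2 t / Δ_i` are close to odd integers `m_i` and every `Δ_i m_i` is
close to `2 t`. Oddness does not depend on the sign of `m_i`, so passing to absolute values
(for `t` as well) makes the multipliers positive.
-/

open MeasureTheory UnitAddTorus
open scoped FourierTransform

section TorusFourier

variable {d : Type*} [Fintype d]

theorem mFourier_apply_add (n : d → ℤ) (x y : UnitAddTorus d) :
    mFourier n (x + y) = mFourier n x * mFourier n y := by
  simp [mFourier, Finset.prod_mul_distrib, fourier_apply, AddCircle.toCircle_add]

theorem mFourierCoeff_comp_add_right {E : Type*} [NormedAddCommGroup E] [NormedSpace ℂ E]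
    (f : UnitAddTorus d → E) (h : UnitAddTorus d) (n : d → ℤ) :
    mFourierCoeff (fun x => f (x + h)) n = mFourier n h • mFourierCoeff f n := by
  -- `mFourierCoeff` integrates against `haarAddCircle` through an instance local to its
  -- Mathlib file, not against the global measure on `AddCircle 1`.
  let _ : MeasureSpace UnitAddCircle := ⟨AddCircle.haarAddCircle⟩
  have : Measure.IsAddHaarMeasure (volume : Measure UnitAddCircle) :=
    inferInstanceAs (Measure.IsAddHaarMeasure AddCircle.haarAddCircle)
  have hchar (x : UnitAddTorus d) : mFourier (-n) x = mFourier n h * mFourier (-n) (x + h) := by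
    have hinv : mFourier n h * mFourier (-n) h = 1 := by
      rw [← mFourier_add, add_neg_cancel, mFourier_zero, ContinuousMap.one_apply]
    rw [mFourier_apply_add, mul_left_comm, hinv, mul_one]
  calc mFourierCoeff (fun x => f (x + h)) n
      = ∫ x, mFourier n h • mFourier (-n) (x + h) • f (x + h) :=
        integral_congr_ae (.of_forall fun x => by simp only [hchar x, mul_smul])
    _ = mFourier n h • ∫ x, mFourier (-n) (x + h) • f (x + h) := integral_smul _ _
    _ = mFourier n h • mFourierCoeff f n :=
        congrArg _ (integral_add_right_eq_self (fun x => mFourier (-n) x • f x) h)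

theorem mFourierCoeff_eq_zero_of_forall_add_right_eq {E : Type*} [NormedAddCommGroup E]
    [NormedSpace ℂ E] {f : UnitAddTorus d → E} {h : UnitAddTorus d} (hf : ∀ x, f (x + h) = f x)
    {n : d → ℤ} (hn : mFourier n h ≠ 1) : mFourierCoeff f n = 0 := by
  have hfix := mFourierCoeff_comp_add_right f h n
  simp only [hf] at hfix
  have hzero : (1 - mFourier n h) • mFourierCoeff f n = 0 := by
    rw [sub_smul, one_smul, sub_eq_zero]
    exact hfix
  exact (smul_eq_zero.mp hzero).resolve_left (sub_ne_zero.mpr hn.symm)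

theorem eq_mFourierCoeff_zero_of_forall_ne {f : C(UnitAddTorus d, ℂ)}
    (hf : ∀ n, n ≠ 0 → mFourierCoeff f n = 0) (x : UnitAddTorus d) :
    f x = mFourierCoeff f 0 := by
  have hsum : Summable (mFourierCoeff f) :=
    summable_of_ne_finset_zero (s := {0}) fun n hn => hf n (by simpa using hn)
  have hsingle := hasSum_single (f := fun n => mFourierCoeff f n • mFourier n x) 0
    fun n hn => by rw [hf n hn, zero_smul]
  rw [(hasSum_mFourier_series_apply_of_summable hsum x).unique hsingle, mFourier_zero,
    ContinuousMap.one_apply, smul_eq_mul, mul_one]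

theorem dense_of_forall_exists_mFourier_ne_one {H : AddSubgroup (UnitAddTorus d)}
    (hH : ∀ n : d → ℤ, n ≠ 0 → ∃ h ∈ H, mFourier n h ≠ 1) :
    Dense (H : Set (UnitAddTorus d)) := by
  -- The quotient seminorm is the distance to `H`.
  let f : C(UnitAddTorus d, ℂ) := ⟨fun x => (‖(x : UnitAddTorus d ⧸ H)‖ : ℂ), by fun_prop⟩
  have hf_coeff (n : d → ℤ) (hn : n ≠ 0) : mFourierCoeff f n = 0 := by
    obtain ⟨h, hh, hne⟩ := hH n hn
    have hf_add (x : UnitAddTorus d) : f (x + h) = f x := by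
      simp only [f, ContinuousMap.coe_mk, QuotientAddGroup.mk_add_of_mem x hh]
    exact mFourierCoeff_eq_zero_of_forall_add_right_eq hf_add hne
  have hf_zero (x : UnitAddTorus d) : f x = 0 := by
    rw [eq_mFourierCoeff_zero_of_forall_ne hf_coeff x,
      ← eq_mFourierCoeff_zero_of_forall_ne hf_coeff 0]
    simp [f]
  exact fun x => QuotientAddGroup.norm_mk_eq_zero_iff_mem_closure.mp
    (Complex.ofReal_eq_zero.mp (hf_zero x))

end TorusFourier

section Kronecker

variable {d : Type*}

/-- The linear flow through the origin of the torus with frequency vector `w`, as a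
one-parameter subgroup; its range is the line whose density Kronecker's theorem asserts. -/
def torusFlow (w : d → ℝ) : ℝ →+ UnitAddTorus d where
  toFun t i := ((t * w i : ℝ) : UnitAddCircle)
  map_zero' := by ext i; simp
  map_add' s t := by ext i; simp [add_mul]

theorem torusFlow_apply (w : d → ℝ) (t : ℝ) (i : d) :
    torusFlow w t i = ((t * w i : ℝ) : UnitAddCircle) := rfl

theorem mFourier_torusFlow [Fintype d] (n : d → ℤ) (w : d → ℝ) (t : ℝ) :
    mFourier n (torusFlow w t) = 𝐞 (t * ∑ i, n i * w i) := by
  rw [Real.fourierChar_apply, Finset.mul_sum, Finset.mul_sum, Complex.ofReal_sum,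
    Finset.sum_mul, Complex.exp_sum]
  refine Finset.prod_congr rfl fun i _ => ?_
  rw [torusFlow_apply, fourier_coe_apply]
  push_cast
  ring_nf

theorem sum_intCast_mul_ne_zero_of_linearIndependent [Fintype d] {R : Type*} [Ring R] [Module ℚ R]
    {w : d → R} (hw : LinearIndependent ℚ w) {n : d → ℤ} (hn : n ≠ 0) : ∑ i, n i * w i ≠ 0 := by
  have hwℤ : LinearIndependent ℤ w := hw.restrict_scalars' ℤ
  contrapose! hn
  exact funext (Fintype.linearIndependent_iff.mp hwℤ n (by simpa only [zsmul_eq_mul] using hn))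

theorem denseRange_torusFlow [Finite d] {w : d → ℝ} (hw : LinearIndependent ℚ w) :
    DenseRange (torusFlow w) := by
  have := Fintype.ofFinite d
  rw [DenseRange, ← AddMonoidHom.coe_range]
  refine dense_of_forall_exists_mFourier_ne_one fun n hn => ?_
  have hs := sum_intCast_mul_ne_zero_of_linearIndependent hw hn
  refine ⟨torusFlow w ((1 / 2) / ∑ i, n i * w i), ⟨_, rfl⟩, ?_⟩
  have hneg : (𝐞 (1 / 2 : ℝ) : ℂ) = -1 := by
    rw [Real.fourierChar_apply, ← Complex.exp_pi_mul_I]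
    push_cast
    ring_nf
  rw [mFourier_torusFlow, div_mul_cancel₀ _ hs, hneg]
  norm_num

theorem exists_forall_abs_mul_sub_intCast_sub_lt [Finite d] {w : d → ℝ}
    (hw : LinearIndependent ℚ w) (θ : d → ℝ) {δ : d → ℝ} (hδ : ∀ i, 0 < δ i) :
    ∃ (t : ℝ) (m : d → ℤ), ∀ i, |t * w i - m i - θ i| < δ i := by
  let U : Set (UnitAddTorus d) := Set.univ.pi fun i => Metric.ball (θ i : UnitAddCircle) (δ i)
  have hU : IsOpen U := isOpen_set_pi Set.finite_univ fun _ _ => Metric.isOpen_ball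
  have hθ : (fun i => (θ i : UnitAddCircle)) ∈ U := fun i _ => Metric.mem_ball_self (hδ i)
  obtain ⟨t, ht⟩ := (denseRange_torusFlow hw).exists_mem_open hU ⟨_, hθ⟩
  refine ⟨t, fun i => round (t * w i - θ i), fun i => ?_⟩
  have hi : dist (torusFlow w t i) (θ i) < δ i := ht i (Set.mem_univ i)
  rwa [torusFlow_apply, dist_eq_norm, ← AddCircle.coe_sub, UnitAddCircle.norm_eq,
    sub_right_comm] at hi

theorem exists_odd_int_forall_abs_mul_sub_lt [Finite d] {w : d → ℝ}
    (hw : LinearIndependent ℚ w) {δ : d → ℝ} (hδ : ∀ i, 0 < δ i) :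
    ∃ (t : ℝ) (m : d → ℤ), ∀ i, Odd (m i) ∧ |t * w i - m i| < δ i := by
  obtain ⟨t, m, hm⟩ :=
    exists_forall_abs_mul_sub_intCast_sub_lt hw (fun _ => 1 / 2) fun i => half_pos (hδ i)
  refine ⟨2 * t, fun i => 2 * m i + 1, fun i => ⟨odd_two_mul_add_one _, ?_⟩⟩
  calc |2 * t * w i - (2 * m i + 1 : ℤ)| = |2 * (t * w i - m i - 1 / 2)| := by
        push_cast; ring_nf
    _ = 2 * |t * w i - m i - 1 / 2| := by rw [abs_mul, abs_two]
    _ < δ i := by linarith [hm i]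

end Kronecker

theorem abs_mul_natAbs_sub_abs_le {R : Type*} [Ring R] [LinearOrder R] [IsStrictOrderedRing R]
    {a : R} (ha : 0 ≤ a) (m : ℤ) (t : R) :
    |a * m.natAbs - abs t| ≤ |a * m - t| := by
  have hcast : a * m.natAbs = |a * m| := by
    rw [abs_mul, abs_of_nonneg ha, Nat.cast_natAbs, Int.cast_abs]
  rw [hcast]
  exact abs_abs_sub_abs_le _ _

theorem exists_odd_nat_forall_abs_mul_sub_lt {d : Type*} [Finite d] {Δ : d → ℝ}
    (hΔ : ∀ i, 0 < Δ i) (hind : LinearIndependent ℚ fun i => (Δ i)⁻¹) {ε : ℝ} (hε : 0 < ε) :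
    ∃ (t : ℝ) (k : d → ℕ), ∀ i, Odd (k i) ∧ |Δ i * k i - t| < ε := by
  obtain ⟨t, m, hm⟩ := exists_odd_int_forall_abs_mul_sub_lt hind fun i => div_pos hε (hΔ i)
  refine ⟨abs t, fun i => (m i).natAbs, fun i => ⟨(hm i).1.natAbs, ?_⟩⟩
  calc |Δ i * (m i).natAbs - abs t|
      ≤ |Δ i * m i - t| := abs_mul_natAbs_sub_abs_le (hΔ i).le _ _
    _ = |Δ i * (t * (Δ i)⁻¹ - m i)| := by
        rw [abs_sub_comm, mul_sub, mul_left_comm, mul_inv_cancel₀ (hΔ i).ne', mul_one]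
    _ = Δ i * |t * (Δ i)⁻¹ - m i| := by rw [abs_mul, abs_of_pos (hΔ i)]
    _ < ε := (lt_div_iff₀' (hΔ i)).mp (hm i).2

/-- Diophantine core of the proof of Theorem 1.8: if the reciprocals
`1/Δ₁, …, 1/Δ_r` are linearly independent over `ℚ`, then for every `ε > 0`
there are odd positive integers `k₁, …, k_r` with `|Δ_i k_i − Δ_j k_j| < ε`
for all `i, j`. -/
theorem perfect_reeb_stmt4 (r : ℕ) (hr : 1 ≤ r) (Δ : Fin r → ℝ)
    (hΔ : ∀ i, 0 < Δ i)
    (hind : LinearIndependent ℚ (fun i : Fin r => (Δ i)⁻¹))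
    (ε : ℝ) (hε : 0 < ε) :
    ∃ k : Fin r → ℕ, (∀ i, Odd (k i)) ∧ (∀ i, 0 < k i) ∧
      ∀ i j, |Δ i * (k i : ℝ) - Δ j * (k j : ℝ)| < ε := by
  obtain ⟨t, k, hk⟩ := exists_odd_nat_forall_abs_mul_sub_lt hΔ hind (half_pos hε)
  refine ⟨k, fun i => (hk i).1, fun i => (hk i).1.pos, fun i j => ?_⟩
  calc |Δ i * (k i : ℝ) - Δ j * (k j : ℝ)|
      ≤ |Δ i * k i - t| + |t - Δ j * k j| := abs_sub_le _ _ _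
    _ = |Δ i * k i - t| + |Δ j * k j - t| := by rw [abs_sub_comm t]
    _ < ε / 2 + ε / 2 := add_lt_add (hk i).2 (hk j).2
    _ = ε := add_halves ε
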